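/- Let γ > 0, δ > 0 and let u : [0, δ] → ℂ be a C^∞ function such that u^(m)(δ) = 0 for every integer m ≥ 0. Then the oscillatory integral ∫₀^δ θ^{γ−1} u(θ) e^{i n θ} dθ admits, as n → ∞, the asymptotic expansion Σ_{m=0}^{∞} u^(m)(0) Γ(m+γ) e^{iπ(m+γ)/2} / (m! · n^{m+γ}); precisely, for every natural number M there exists a constant C > 0 such that for all integers n ≥ 1, |∫₀^δ θ^{γ−1} u(θ) e^{i n θ} dθ − Σ_{m=0}^{M−1} u^(m)(0) Γ(m+γ) e^{iπ(m+γ)/2} / (m! · n^{m+γ})| ≤ C · n^{−(M+γ)}. -/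

import Mathlib

/-!
Integrate by parts repeatedly against the antiderivatives of `θ^(γ-1) e^(iNθ)` obtained by
integrating it along the vertical half-lines `θ + it`, `t > 0`, where it decays like `e^(-Nt)`.
Only the endpoint `0` contributes, and there Euler's integral for `Γ(m+γ)` gives the coefficients.
The `(j+1)`-fold antiderivative is only `O(N^(-j))` uniformly on `[0, δ]`, so `M` integrations by
parts do not give the claimed error: one integrates by parts `K + 1` times with `K ≥ M + γ` and
absorbs the terms from `M` on into the error.
-/

open MeasureTheory Set Filter Topology Asymptotics
open scoped Nat

section IteratedIntegrationByParts

variable {A : Type*} [NormedRing A] [NormedAlgebra ℝ A] [CompleteSpace A]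

theorem hasDerivAt_iteratedDerivWithin_Icc {E : Type*} [NormedAddCommGroup E] [NormedSpace ℝ E]
    {a b x : ℝ} {n m : ℕ} {u : ℝ → E} (hu : ContDiffOn ℝ n u (Icc a b)) (hm : m < n)
    (hx : x ∈ Ioo a b) :
    HasDerivAt (iteratedDerivWithin m u (Icc a b))
      (iteratedDerivWithin (m + 1) u (Icc a b) x) x := by
  rw [iteratedDerivWithin_succ]
  exact (hu.differentiableOn_iteratedDerivWithin (mod_cast hm)
    (uniqueDiffOn_Icc (hx.1.trans hx.2)) x (Ioo_subset_Icc_self hx)).hasDerivWithinAt.hasDerivAt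
    (Icc_mem_nhds hx.1 hx.2)

theorem integral_mul_eq_sum_add_integral_iteratedDerivWithin_mul {a b : ℝ} (hab : a < b)
    {u : ℝ → A} {V : ℕ → ℝ → A} (hV : ∀ m, ∀ x ∈ Ioo a b, HasDerivAt (V (m + 1)) (V m x) x)
    (hV_cont : ∀ m, ContinuousOn (V (m + 1)) (Icc a b))
    (hV_int : IntervalIntegrable (V 0) volume a b) (k : ℕ) (hu : ContDiffOn ℝ k u (Icc a b)) :
    ∫ x in a..b, u x * V 0 x =
      ∑ m ∈ Finset.range k, (-1) ^ m * (iteratedDerivWithin m u (Icc a b) b * V (m + 1) b -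
        iteratedDerivWithin m u (Icc a b) a * V (m + 1) a) +
      (-1) ^ k * ∫ x in a..b, iteratedDerivWithin k u (Icc a b) x * V k x := by
  induction k with
  | zero => simp
  | succ k ih =>
    have hu_cont (m : ℕ) (hm : m ≤ k + 1) :
        ContinuousOn (iteratedDerivWithin m u (Icc a b)) (uIcc a b) := by
      rw [uIcc_of_le hab.le]
      exact hu.continuousOn_iteratedDerivWithin (mod_cast hm) (uniqueDiffOn_Icc hab)
    have hVk_cont : ContinuousOn (V (k + 1)) (uIcc a b) := by
      simpa only [uIcc_of_le hab.le] using hV_cont k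
    have hVk_int : IntervalIntegrable (V k) volume a b := by
      cases k with
      | zero => exact hV_int
      | succ k => exact (hV_cont k).intervalIntegrable_of_Icc hab.le
    have by_parts := intervalIntegral.integral_mul_deriv_eq_deriv_mul_of_hasDerivAt
      (hu_cont k k.le_succ) hVk_cont
      (fun x hx => hasDerivAt_iteratedDerivWithin_Icc hu k.lt_succ_self
        (by simpa only [min_eq_left hab.le, max_eq_right hab.le] using hx))
      (fun x hx => hV k x (by simpa only [min_eq_left hab.le, max_eq_right hab.le] using hx))
      (hu_cont (k + 1) le_rfl).intervalIntegrable hVk_int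
    rw [ih (hu.of_le (mod_cast k.le_succ)), by_parts, Finset.sum_range_succ, pow_succ]
    noncomm_ring

end IteratedIntegrationByParts

section VerticalAntiderivatives

/-- The `j`-th moment `∫₀^∞ tʲ f(θ + it) dt` of `f` along the vertical half-line above `θ`. -/
noncomputable def verticalMoment (f : ℂ → ℂ) (j : ℕ) (θ : ℝ) : ℂ :=
  ∫ t in Ioi (0 : ℝ), (t : ℂ) ^ j * f (θ + t * Complex.I)

/-- The `m`-fold iterated antiderivative of `f` which vanishes at `+i∞`. For `m = j + 1` this is
Cauchy's formula for repeated integration, `(-1) ^ (j + 1) / j! * ∫ (z - θ) ^ j * f z dz`, over the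
half-line `z = θ + it`. -/
noncomputable def verticalAntideriv (f : ℂ → ℂ) : ℕ → ℝ → ℂ
  | 0, θ => f θ
  | j + 1, θ => (-Complex.I) ^ (j + 1) / (j ! : ℂ) * verticalMoment f j θ

/-- `f` is holomorphic on the closed half-lines above `s`, and `f` and its derivative are dominated
there, uniformly over `s`, by a function of the height with finite moments. -/
structure VerticallyDecaying (f : ℂ → ℂ) (s : Set ℝ) (bound : ℝ → ℝ) : Prop where
  differentiableAt : ∀ x ∈ s, ∀ t : ℝ, 0 ≤ t → DifferentiableAt ℂ f (x + t * Complex.I)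
  norm_le : ∀ x ∈ s, ∀ t : ℝ, 0 < t → ‖f (x + t * Complex.I)‖ ≤ bound t
  norm_deriv_le : ∀ x ∈ s, ∀ t : ℝ, 0 < t → ‖deriv f (x + t * Complex.I)‖ ≤ bound t
  integrableOn : ∀ j : ℕ, IntegrableOn (fun t : ℝ => t ^ j * bound t) (Ioi 0)

theorem norm_ofReal_pow_mul_le {t B : ℝ} (ht : 0 ≤ t) {z : ℂ} (hz : ‖z‖ ≤ B) (j : ℕ) :
    ‖(t : ℂ) ^ j * z‖ ≤ t ^ j * B := by
  rw [norm_mul, norm_pow, Complex.norm_of_nonneg ht]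
  gcongr

theorem aestronglyMeasurable_pow_mul_deriv (f : ℂ → ℂ) (θ : ℝ) (j : ℕ) :
    AEStronglyMeasurable (fun t : ℝ => (t : ℂ) ^ j * deriv f (θ + t * Complex.I))
      (volume.restrict (Ioi 0)) :=
  (Measurable.mul (by fun_prop)
    ((measurable_deriv f).comp (by fun_prop))).aestronglyMeasurable

namespace VerticallyDecaying

variable {f : ℂ → ℂ} {s : Set ℝ} {bound : ℝ → ℝ} {θ : ℝ}

theorem hasDerivAt_height (h : VerticallyDecaying f s bound) (hθ : θ ∈ s) {t : ℝ} (ht : 0 ≤ t) :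
    HasDerivAt (fun t : ℝ => f (θ + t * Complex.I))
      (deriv f (θ + t * Complex.I) * Complex.I) t := by
  have h_inner : HasDerivAt (fun z : ℂ => (θ : ℂ) + z * Complex.I) Complex.I (t : ℂ) := by
    simpa using ((hasDerivAt_id (t : ℂ)).mul_const Complex.I).const_add (θ : ℂ)
  exact ((h.differentiableAt θ hθ t ht).hasDerivAt.comp (t : ℂ) h_inner).comp_ofReal

theorem hasDerivAt_base (h : VerticallyDecaying f s bound) (hθ : θ ∈ s) {t : ℝ} (ht : 0 ≤ t) :
    HasDerivAt (fun θ : ℝ => f (θ + t * Complex.I)) (deriv f (θ + t * Complex.I)) θ :=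
  ((h.differentiableAt θ hθ t ht).hasDerivAt.comp_add_const (θ : ℂ) _).comp_ofReal

theorem aestronglyMeasurable (h : VerticallyDecaying f s bound) (hθ : θ ∈ s) (j : ℕ) :
    AEStronglyMeasurable (fun t : ℝ => (t : ℂ) ^ j * f (θ + t * Complex.I))
      (volume.restrict (Ioi 0)) :=
  ContinuousOn.aestronglyMeasurable (fun _ ht => ContinuousAt.continuousWithinAt <|
    ContinuousAt.mul (by fun_prop) (h.hasDerivAt_height hθ (le_of_lt ht)).continuousAt)
    measurableSet_Ioi

theorem integrableOn_moment (h : VerticallyDecaying f s bound) (hθ : θ ∈ s) (j : ℕ) :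
    IntegrableOn (fun t : ℝ => (t : ℂ) ^ j * f (θ + t * Complex.I)) (Ioi 0) :=
  (h.integrableOn j).mono' (h.aestronglyMeasurable hθ j) <|
    ae_restrict_of_forall_mem measurableSet_Ioi fun t ht =>
      norm_ofReal_pow_mul_le (le_of_lt ht) (h.norm_le θ hθ t ht) j

theorem integrableOn_moment_deriv (h : VerticallyDecaying f s bound) (hθ : θ ∈ s) (j : ℕ) :
    IntegrableOn (fun t : ℝ => (t : ℂ) ^ j * deriv f (θ + t * Complex.I)) (Ioi 0) :=
  (h.integrableOn j).mono' (aestronglyMeasurable_pow_mul_deriv f θ j) <|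
    ae_restrict_of_forall_mem measurableSet_Ioi fun t ht =>
      norm_ofReal_pow_mul_le (le_of_lt ht) (h.norm_deriv_le θ hθ t ht) j

theorem hasDerivAt_verticalMoment (h : VerticallyDecaying f s bound) (hs : s ∈ 𝓝 θ) (j : ℕ) :
    HasDerivAt (verticalMoment f j) (verticalMoment (deriv f) j θ) θ := by
  have hθ : θ ∈ s := mem_of_mem_nhds hs
  exact (hasDerivAt_integral_of_dominated_loc_of_deriv_le hs
    (eventually_of_mem hs fun x hx => h.aestronglyMeasurable hx j)
    (h.integrableOn_moment hθ j) (aestronglyMeasurable_pow_mul_deriv f θ j)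
    (ae_restrict_of_forall_mem measurableSet_Ioi fun t ht x hx =>
      norm_ofReal_pow_mul_le (le_of_lt ht) (h.norm_deriv_le x hx t ht) j)
    (h.integrableOn j)
    (ae_restrict_of_forall_mem measurableSet_Ioi fun t ht x hx =>
      (h.hasDerivAt_base hx (le_of_lt ht)).const_mul _)).2

-- The Cauchy-Riemann equation `∂f/∂t = i ∂f/∂θ` turns the `θ`-derivative into one in `t`.
theorem verticalMoment_deriv (h : VerticallyDecaying f s bound) (hθ : θ ∈ s) (j : ℕ) :
    verticalMoment (deriv f) j θ =
      Complex.I * (j * verticalMoment f (j - 1) θ + 0 ^ j * f θ) := by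
  have h_deriv (t : ℝ) (ht : 0 ≤ t) :
      HasDerivAt (fun t : ℝ => (t : ℂ) ^ j * f (θ + t * Complex.I))
        (j * ((t : ℂ) ^ (j - 1) * f (θ + t * Complex.I)) +
          Complex.I * ((t : ℂ) ^ j * deriv f (θ + t * Complex.I))) t :=
    (((hasDerivAt_pow j (t : ℂ)).comp_ofReal).mul (h.hasDerivAt_height hθ ht)).congr_deriv
      (by ring)
  have h_int := (h.integrableOn_moment hθ (j - 1)).const_mul (j : ℂ)
  have h_int' := (h.integrableOn_moment_deriv hθ j).const_mul Complex.I
  have h_lim := tendsto_zero_of_hasDerivAt_of_integrableOn_Ioi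
    (fun t ht => h_deriv t (le_of_lt ht)) (h_int.add h_int') (h.integrableOn_moment hθ j)
  have ftc := integral_Ioi_of_hasDerivAt_of_tendsto' h_deriv (h_int.add h_int') h_lim
  rw [integral_add h_int h_int', integral_const_mul, integral_const_mul] at ftc
  change j * verticalMoment f (j - 1) θ + Complex.I * verticalMoment (deriv f) j θ = _ at ftc
  simp only [Complex.ofReal_zero, zero_mul, add_zero, zero_sub] at ftc
  linear_combination -Complex.I * ftc + verticalMoment (deriv f) j θ * Complex.I_mul_I

theorem hasDerivAt_verticalAntideriv (h : VerticallyDecaying f s bound) (hs : s ∈ 𝓝 θ) (m : ℕ) :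
    HasDerivAt (verticalAntideriv f (m + 1)) (verticalAntideriv f m θ) θ := by
  refine ((h.hasDerivAt_verticalMoment hs m).const_mul
    ((-Complex.I) ^ (m + 1) / (m ! : ℂ))).congr_deriv ?_
  rw [h.verticalMoment_deriv (mem_of_mem_nhds hs)]
  cases m with
  | zero =>
    simp only [verticalAntideriv, Nat.factorial_zero]
    push_cast
    linear_combination -f θ * Complex.I_mul_I
  | succ j =>
    have h_succ : (j : ℂ) + 1 ≠ 0 := j.cast_add_one_ne_zero
    have h_fact : (j ! : ℂ) ≠ 0 := mod_cast j.factorial_ne_zero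
    simp only [verticalAntideriv, Nat.factorial_succ, Nat.add_sub_cancel]
    push_cast
    field_simp
    linear_combination
      -((-Complex.I) ^ (j + 1) * (j + 1) * verticalMoment f j θ) * Complex.I_mul_I

end VerticallyDecaying

end VerticalAntiderivatives

section OscillatoryKernel

theorem rpow_le_rpow_add_rpow {x y z : ℝ} (p : ℝ) (hx : 0 < x) (hxy : x ≤ y) (hyz : y ≤ z) :
    y ^ p ≤ x ^ p + z ^ p := by
  have hy : 0 < y := hx.trans_le hxy
  rcases le_total p 0 with hp | hp
  · exact (Real.rpow_le_rpow_of_nonpos hx hxy hp).trans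
      (le_add_of_nonneg_right (Real.rpow_nonneg (hy.le.trans hyz) p))
  · exact (Real.rpow_le_rpow hy.le hyz hp).trans
      (le_add_of_nonneg_left (Real.rpow_nonneg hx.le p))

theorem pow_mul_exp_neg_mul_le {N t : ℝ} (hN : 0 < N) (ht : 0 ≤ t) (m : ℕ) :
    t ^ m * Real.exp (-(N * t)) ≤ m ! * (2 / N) ^ m * Real.exp (-(N / 2 * t)) := by
  have h_pow : t ^ m ≤ m ! * (2 / N) ^ m * Real.exp (N / 2 * t) :=
    calc t ^ m = m ! * (2 / N) ^ m * ((N / 2 * t) ^ m / m !) := by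
          rw [mul_assoc, mul_div_assoc', ← mul_pow, mul_div_cancel₀ _ (by positivity)]
          field_simp
      _ ≤ m ! * (2 / N) ^ m * Real.exp (N / 2 * t) := by
          gcongr
          exact Real.pow_div_factorial_le_exp _ (by positivity) m
  calc t ^ m * Real.exp (-(N * t))
      ≤ m ! * (2 / N) ^ m * Real.exp (N / 2 * t) * Real.exp (-(N * t)) := by gcongr
    _ = m ! * (2 / N) ^ m * Real.exp (-(N / 2 * t)) := by
        rw [mul_assoc, ← Real.exp_add]
        ring_nf

theorem integrableOn_pow_mul_add_rpow_mul_exp_neg_mul {d N : ℝ} (hd : 0 < d) (hN : 0 < N)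
    (p : ℝ) (j : ℕ) :
    IntegrableOn (fun t : ℝ => t ^ j * (d + t) ^ p * Real.exp (-(N * t))) (Ioi 0) := by
  refine integrable_of_isBigO_exp_neg (half_pos hN) (fun t ht => ?_) ?_
  · have h_base : d + t ≠ 0 := (add_pos_of_pos_of_nonneg hd ht).ne'
    exact ContinuousAt.continuousWithinAt (by fun_prop (disch := simp [h_base]))
  · have h_growth : (fun t : ℝ => (d + t) ^ (j + p)) =O[atTop]
        fun t => Real.exp (N / 2 * (d + t)) :=
      (isLittleO_rpow_exp_pos_mul_atTop (j + p) (half_pos hN)).isBigO.comp_tendsto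
        (tendsto_atTop_add_const_left atTop d tendsto_id)
    have h_le : (fun t : ℝ => t ^ j * (d + t) ^ p) =O[atTop] fun t => (d + t) ^ (j + p) := by
      refine IsBigO.of_norm_eventuallyLE ?_
      filter_upwards [eventually_ge_atTop 0] with t ht
      rw [Real.norm_of_nonneg (by positivity), Real.rpow_add (by positivity), Real.rpow_natCast]
      gcongr
      linarith
    have h_exp : (fun t : ℝ => Real.exp (N / 2 * (d + t)) * Real.exp (-(N * t))) =O[atTop]
        fun t => Real.exp (-(N / 2) * t) := by
      refine (isBigO_const_mul_self (Real.exp (N / 2 * d))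
        (fun t => Real.exp (-(N / 2) * t)) atTop).congr_left fun t => ?_
      rw [← Real.exp_add, ← Real.exp_add]
      ring_nf
    exact ((h_le.trans h_growth).mul (isBigO_refl _ _)).trans h_exp

/-- The integrand `z ↦ z^(γ-1) e^(iNz)` of the amplitude-free oscillatory integral. -/
noncomputable def oscKernel (γ N : ℝ) (z : ℂ) : ℂ :=
  z ^ ((γ - 1 : ℝ) : ℂ) * Complex.exp (Complex.I * N * z)

variable {γ N : ℝ}

theorem norm_oscKernel (γ N : ℝ) (z : ℂ) :
    ‖oscKernel γ N z‖ = ‖z‖ ^ (γ - 1) * Real.exp (-(N * z.im)) := by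
  rw [oscKernel, norm_mul, Complex.norm_cpow_real, Complex.norm_exp]
  simp

theorem hasDerivAt_oscKernel {z : ℂ} (hz : z ∈ Complex.slitPlane) :
    HasDerivAt (oscKernel γ N)
      ((γ - 1) * oscKernel (γ - 1) N z + Complex.I * N * oscKernel γ N z) z := by
  have h_cpow := (hasDerivAt_id z).cpow_const (c := ((γ - 1 : ℝ) : ℂ)) hz
  have h_exp := ((hasDerivAt_id z).const_mul (Complex.I * N)).cexp
  refine (h_cpow.mul h_exp).congr_deriv ?_
  simp only [oscKernel, id_eq]
  push_cast
  ring

theorem ofReal_add_mul_I_mem_slitPlane {θ t : ℝ} (h : 0 < θ ∨ 0 < t) :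
    (θ + t * Complex.I : ℂ) ∈ Complex.slitPlane := by
  rw [Complex.mem_slitPlane_iff]
  simpa using h.imp_right ne_of_gt

theorem norm_add_mul_I_le {θ t : ℝ} (hθ : 0 ≤ θ) (ht : 0 ≤ t) :
    ‖(θ + t * Complex.I : ℂ)‖ ≤ θ + t := by
  simpa [abs_of_nonneg hθ, abs_of_nonneg ht] using norm_add_le (θ : ℂ) (t * Complex.I)

theorem base_le_norm_add_mul_I (θ t : ℝ) : θ ≤ ‖(θ + t * Complex.I : ℂ)‖ := by
  simpa using Complex.re_le_norm (θ + t * Complex.I)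

theorem height_le_norm_add_mul_I (θ t : ℝ) : t ≤ ‖(θ + t * Complex.I : ℂ)‖ := by
  simpa using Complex.im_le_norm (θ + t * Complex.I)

theorem norm_oscKernel_le (γ N : ℝ) {c d θ t : ℝ} (hc : 0 < c)
    (hc_le : c ≤ ‖(θ + t * Complex.I : ℂ)‖) (hθ : 0 ≤ θ) (hd : θ ≤ d) (ht : 0 ≤ t) :
    ‖oscKernel γ N (θ + t * Complex.I)‖ ≤
      (c ^ (γ - 1) + (d + t) ^ (γ - 1)) * Real.exp (-(N * t)) := by
  have h_le : ‖(θ + t * Complex.I : ℂ)‖ ≤ d + t :=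
    (norm_add_mul_I_le hθ ht).trans (by gcongr)
  have h_im : (θ + t * Complex.I : ℂ).im = t := by simp
  rw [norm_oscKernel, h_im]
  gcongr
  exact rpow_le_rpow_add_rpow _ hc hc_le h_le

theorem verticallyDecaying_oscKernel (γ : ℝ) {c d : ℝ} (hN : 0 < N) (hc : 0 < c) (hd : 0 < d) :
    VerticallyDecaying (oscKernel γ N) (Icc c d) fun t =>
      |γ - 1| * ((c ^ (γ - 1 - 1) + (d + t) ^ (γ - 1 - 1)) * Real.exp (-(N * t))) +
        (N + 1) * ((c ^ (γ - 1) + (d + t) ^ (γ - 1)) * Real.exp (-(N * t))) where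
  differentiableAt x hx t _ :=
    (hasDerivAt_oscKernel (ofReal_add_mul_I_mem_slitPlane
      (Or.inl (hc.trans_le hx.1)))).differentiableAt
  norm_le x hx t ht := by
    have h_bound := norm_oscKernel_le γ N hc (hx.1.trans (base_le_norm_add_mul_I x t))
      (hc.le.trans hx.1) hx.2 ht.le
    refine h_bound.trans ((le_mul_of_one_le_left (by positivity) ?_).trans
      (le_add_of_nonneg_left (by positivity)))
    linarith
  norm_deriv_le x hx t ht := by
    have h_bound (γ : ℝ) := norm_oscKernel_le γ N hc (hx.1.trans (base_le_norm_add_mul_I x t))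
      (hc.le.trans hx.1) hx.2 ht.le
    have h_gamma : ‖(γ - 1 : ℂ)‖ = |γ - 1| := mod_cast Complex.norm_real (γ - 1)
    rw [(hasDerivAt_oscKernel (ofReal_add_mul_I_mem_slitPlane
      (Or.inl (hc.trans_le hx.1)))).deriv]
    refine (norm_add_le _ _).trans ?_
    rw [norm_mul, norm_mul, norm_mul, Complex.norm_I, one_mul, h_gamma,
      Complex.norm_of_nonneg hN.le]
    gcongr
    · exact h_bound (γ - 1)
    · linarith
    · exact h_bound γ
  integrableOn j := by
    have h_int (p : ℝ) : IntegrableOn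
        (fun t => t ^ j * ((c ^ p + (d + t) ^ p) * Real.exp (-(N * t)))) (Ioi 0) := by
      have h_const := integrableOn_pow_mul_add_rpow_mul_exp_neg_mul hd hN 0 j
      refine ((h_const.const_mul (c ^ p)).add
        (integrableOn_pow_mul_add_rpow_mul_exp_neg_mul hd hN p j)).congr (ae_of_all _ fun t => ?_)
      simp only [Pi.add_apply, Real.rpow_zero]
      ring
    refine (((h_int (γ - 1 - 1)).const_mul |γ - 1|).add
      ((h_int (γ - 1)).const_mul (N + 1))).congr (ae_of_all _ fun t => ?_)
    simp only [Pi.add_apply]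
    ring

theorem hasDerivAt_verticalAntideriv_oscKernel (γ : ℝ) {θ : ℝ} (hN : 0 < N) (hθ : 0 < θ) (m : ℕ) :
    HasDerivAt (verticalAntideriv (oscKernel γ N) (m + 1))
      (verticalAntideriv (oscKernel γ N) m θ) θ :=
  have hθ' : 0 < 2 * θ := by positivity
  (verticallyDecaying_oscKernel γ hN (half_pos hθ) hθ').hasDerivAt_verticalAntideriv
    (Icc_mem_nhds (half_lt_self hθ) (by linarith)) m

/-- An integrable majorant on `t > 0`, uniform in `0 ≤ θ ≤ d`, of `θ ↦ |θ + it|^(γ-1) e^(-Nt)`. -/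
noncomputable def oscMajorant (γ d N t : ℝ) : ℝ :=
  (t ^ (γ - 1) + (d + t) ^ (γ - 1)) * Real.exp (-(N * t))

theorem integrableOn_oscMajorant {d : ℝ} (hγ : 0 < γ) (hd : 0 < d) (hN : 0 < N) :
    IntegrableOn (oscMajorant γ d N) (Ioi 0) := by
  have h_sing : IntegrableOn (fun t : ℝ => t ^ (γ - 1) * Real.exp (-(N * t))) (Ioi 0) := by
    simpa only [Real.rpow_one, neg_mul] using
      integrableOn_rpow_mul_exp_neg_mul_rpow (by linarith : -1 < γ - 1) one_pos hN
  refine (h_sing.add (integrableOn_pow_mul_add_rpow_mul_exp_neg_mul hd hN (γ - 1) 0)).congr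
    (ae_of_all _ fun t => ?_)
  simp only [oscMajorant, Pi.add_apply]
  ring

theorem norm_pow_mul_oscKernel_le {d θ t : ℝ} (γ : ℝ) (hN : 0 < N) (hθ : θ ∈ Icc 0 d) (ht : 0 < t)
    (j : ℕ) :
    ‖(t : ℂ) ^ j * oscKernel γ N (θ + t * Complex.I)‖ ≤
      j ! * (2 / N) ^ j * oscMajorant γ d (N / 2) t := by
  have hd : 0 ≤ d := hθ.1.trans hθ.2
  calc ‖(t : ℂ) ^ j * oscKernel γ N (θ + t * Complex.I)‖
      ≤ t ^ j * ((t ^ (γ - 1) + (d + t) ^ (γ - 1)) * Real.exp (-(N * t))) :=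
        norm_ofReal_pow_mul_le ht.le
          (norm_oscKernel_le γ N ht (height_le_norm_add_mul_I θ t) hθ.1 hθ.2 ht.le) j
    _ = (t ^ (γ - 1) + (d + t) ^ (γ - 1)) * (t ^ j * Real.exp (-(N * t))) := by ring
    _ ≤ (t ^ (γ - 1) + (d + t) ^ (γ - 1)) *
          (j ! * (2 / N) ^ j * Real.exp (-(N / 2 * t))) := by
        gcongr ?_ * ?_
        exact pow_mul_exp_neg_mul_le hN ht.le j
    _ = j ! * (2 / N) ^ j * oscMajorant γ d (N / 2) t := by
        rw [oscMajorant]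
        ring

theorem norm_verticalAntideriv_oscKernel_le {d θ : ℝ} (hγ : 0 < γ) (hd : 0 < d) (hN : 0 < N)
    (hθ : θ ∈ Icc 0 d) (j : ℕ) :
    ‖verticalAntideriv (oscKernel γ N) (j + 1) θ‖ ≤
      (2 / N) ^ j * ∫ t in Ioi 0, oscMajorant γ d (N / 2) t := by
  have h_moment : ‖verticalMoment (oscKernel γ N) j θ‖ ≤
      j ! * (2 / N) ^ j * ∫ t in Ioi 0, oscMajorant γ d (N / 2) t := by
    rw [← integral_const_mul]
    exact norm_integral_le_of_norm_le ((integrableOn_oscMajorant hγ hd (half_pos hN)).const_mul _)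
      (ae_restrict_of_forall_mem measurableSet_Ioi fun t ht =>
        norm_pow_mul_oscKernel_le γ hN hθ ht j)
  rw [verticalAntideriv, norm_mul, norm_div, norm_pow, norm_neg, Complex.norm_I, one_pow,
    Complex.norm_natCast, one_div, inv_mul_le_iff₀ (by positivity), ← mul_assoc]
  exact h_moment

theorem continuousOn_verticalAntideriv_oscKernel {d : ℝ} (hγ : 0 < γ) (hd : 0 < d) (hN : 0 < N)
    (j : ℕ) :
    ContinuousOn (verticalAntideriv (oscKernel γ N) (j + 1)) (Icc 0 d) := by
  have h_cont (θ : ℝ) {t : ℝ} (ht : 0 < t) : ContinuousAt (oscKernel γ N) (θ + t * Complex.I) :=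
    (hasDerivAt_oscKernel (ofReal_add_mul_I_mem_slitPlane (Or.inr ht))).continuousAt
  refine continuousOn_const.mul (continuousOn_of_dominated (fun θ _ => ?_)
    (fun θ hθ => ae_restrict_of_forall_mem measurableSet_Ioi fun t ht =>
      norm_pow_mul_oscKernel_le γ hN hθ ht j)
    ((integrableOn_oscMajorant hγ hd (half_pos hN)).const_mul _)
    (ae_restrict_of_forall_mem measurableSet_Ioi fun t ht θ _ => ?_))
  · exact ContinuousOn.aestronglyMeasurable (fun t ht => ContinuousAt.continuousWithinAt <|
      ContinuousAt.mul (by fun_prop) <|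
        (h_cont θ ht).comp (f := fun t : ℝ => (θ + t * Complex.I : ℂ)) (by fun_prop))
      measurableSet_Ioi
  · exact ContinuousAt.continuousWithinAt <| continuousAt_const.mul <|
      (h_cont θ ht).comp (f := fun θ : ℝ => (θ + t * Complex.I : ℂ)) (by fun_prop)

end OscillatoryKernel

section EndpointExpansion

/-- The coefficient `Γ(m+γ) e^(iπ(m+γ)/2) / (m! N^(m+γ))` of `u^(m)(0)` in the expansion, that is,
the Abel-regularised value of `∫₀^∞ θ^(m+γ-1) / m! * e^(iNθ) dθ`. -/
noncomputable def endpointCoeff (γ N : ℝ) (m : ℕ) : ℂ :=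
  Real.Gamma (m + γ) * Complex.exp (Complex.I * Real.pi * (m + γ) / 2) /
    ((m ! : ℂ) * ((N ^ (m + γ) : ℝ) : ℂ))

variable {γ N : ℝ}

theorem oscKernel_mul_I {t : ℝ} (γ N : ℝ) (ht : 0 < t) :
    oscKernel γ N (t * Complex.I) =
      Complex.exp (Complex.I * Real.pi * (γ - 1) / 2) *
        ((t ^ (γ - 1) * Real.exp (-(N * t)) : ℝ) : ℂ) := by
  have h_cpow : ((t : ℂ) * Complex.I) ^ ((γ - 1 : ℝ) : ℂ) =
      Complex.exp (Complex.I * Real.pi * (γ - 1) / 2) * ((t ^ (γ - 1) : ℝ) : ℂ) := by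
    have ht' : (t : ℂ) ≠ 0 := mod_cast ht.ne'
    rw [Complex.cpow_def_of_ne_zero (mul_ne_zero ht' Complex.I_ne_zero),
      Complex.log_ofReal_mul ht Complex.I_ne_zero, Complex.log_I, Real.rpow_def_of_pos ht,
      Complex.ofReal_exp, ← Complex.exp_add]
    push_cast
    ring_nf
  have h_exp : Complex.I * N * (t * Complex.I) = ((-(N * t) : ℝ) : ℂ) := by
    push_cast
    linear_combination N * t * Complex.I_mul_I
  rw [oscKernel, h_cpow, h_exp, ← Complex.ofReal_exp]
  push_cast
  ring

theorem verticalMoment_oscKernel_zero (hγ : 0 < γ) (hN : 0 < N) (j : ℕ) :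
    verticalMoment (oscKernel γ N) j 0 =
      Complex.exp (Complex.I * Real.pi * (γ - 1) / 2) *
        ((Real.Gamma (j + γ) / N ^ (j + γ) : ℝ) : ℂ) := by
  have h_integrand : EqOn (fun t : ℝ => (t : ℂ) ^ j * oscKernel γ N ((0 : ℝ) + t * Complex.I))
      (fun t => Complex.exp (Complex.I * Real.pi * (γ - 1) / 2) *
        ((t ^ (j + γ - 1) * Real.exp (-(N * t)) : ℝ) : ℂ)) (Ioi 0) := fun t (ht : 0 < t) => by
    simp only [Complex.ofReal_zero, zero_add]
    rw [oscKernel_mul_I γ N ht, add_sub_assoc, Real.rpow_add ht, Real.rpow_natCast]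
    push_cast
    ring
  rw [verticalMoment, setIntegral_congr_fun measurableSet_Ioi h_integrand, integral_const_mul,
    integral_complex_ofReal, Real.integral_rpow_mul_exp_neg_mul_Ioi (by positivity) hN,
    Real.div_rpow zero_le_one hN.le, Real.one_rpow, one_div_mul_eq_div]

theorem neg_one_pow_mul_verticalAntideriv_oscKernel_zero (hγ : 0 < γ) (hN : 0 < N) (m : ℕ) :
    (-1) ^ (m + 1) * verticalAntideriv (oscKernel γ N) (m + 1) 0 = endpointCoeff γ N m := by
  have h_phase : Complex.exp (Complex.I * Real.pi * (m + γ) / 2) =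
      Complex.I ^ (m + 1) * Complex.exp (Complex.I * Real.pi * (γ - 1) / 2) := by
    have h_pow : Complex.I ^ (m + 1) = Complex.exp ((m + 1 : ℕ) * (Real.pi / 2 * Complex.I)) := by
      rw [Complex.exp_nat_mul, Complex.exp_pi_div_two_mul_I]
    rw [h_pow, ← Complex.exp_add]
    congr 1
    push_cast
    ring
  have h_sign : (-1 : ℂ) ^ (m + 1) * (-Complex.I) ^ (m + 1) = Complex.I ^ (m + 1) := by
    rw [← mul_pow, neg_one_mul, neg_neg]
  rw [verticalAntideriv, verticalMoment_oscKernel_zero hγ hN, endpointCoeff, h_phase, ← h_sign]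
  push_cast
  ring

theorem intervalIntegrable_oscKernel (hγ : 0 < γ) (N a b : ℝ) :
    IntervalIntegrable (fun θ : ℝ => ((θ ^ (γ - 1) : ℝ) : ℂ) * Complex.exp (Complex.I * N * θ))
      volume a b := by
  have h_rpow : IntervalIntegrable (fun θ : ℝ => θ ^ (γ - 1)) volume a b :=
    intervalIntegral.intervalIntegrable_rpow' (by linarith)
  have h_ofReal : IntervalIntegrable (fun θ : ℝ => ((θ ^ (γ - 1) : ℝ) : ℂ)) volume a b :=
    ⟨h_rpow.1.ofReal, h_rpow.2.ofReal⟩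
  exact h_ofReal.mul_continuousOn (by fun_prop)

theorem oscKernel_ofReal {θ : ℝ} (γ N : ℝ) (hθ : 0 ≤ θ) :
    oscKernel γ N θ = ((θ ^ (γ - 1) : ℝ) : ℂ) * Complex.exp (Complex.I * N * θ) := by
  rw [oscKernel, Complex.ofReal_cpow hθ]

theorem integral_rpow_mul_exp_eq_sum_add {δ : ℝ} {u : ℝ → ℂ} {k : ℕ} (hγ : 0 < γ) (hδ : 0 < δ)
    (hN : 0 < N) (hu : ContDiffOn ℝ k u (Icc 0 δ))
    (hend : ∀ m < k, iteratedDerivWithin m u (Icc 0 δ) δ = 0) :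
    ∫ θ in (0 : ℝ)..δ, (θ ^ (γ - 1) : ℝ) * u θ * Complex.exp (Complex.I * N * θ) =
      ∑ m ∈ Finset.range k, iteratedDerivWithin m u (Icc 0 δ) 0 * endpointCoeff γ N m +
        (-1) ^ k * ∫ θ in (0 : ℝ)..δ,
          iteratedDerivWithin k u (Icc 0 δ) θ * verticalAntideriv (oscKernel γ N) k θ := by
  have h_kernel : EqOn (fun θ : ℝ => ((θ ^ (γ - 1) : ℝ) : ℂ) * Complex.exp (Complex.I * N * θ))
      (verticalAntideriv (oscKernel γ N) 0) (uIcc 0 δ) := fun θ hθ => by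
    rw [uIcc_of_le hδ.le] at hθ
    exact (oscKernel_ofReal γ N hθ.1).symm
  have h_integrand : EqOn
      (fun θ : ℝ => (θ ^ (γ - 1) : ℝ) * u θ * Complex.exp (Complex.I * N * θ))
      (fun θ => u θ * verticalAntideriv (oscKernel γ N) 0 θ) (uIcc 0 δ) := fun θ hθ => by
    simp only [← h_kernel hθ]
    ring
  rw [intervalIntegral.integral_congr h_integrand,
    integral_mul_eq_sum_add_integral_iteratedDerivWithin_mul hδ
      (fun m θ hθ => hasDerivAt_verticalAntideriv_oscKernel γ hN hθ.1 m)
      (fun m => continuousOn_verticalAntideriv_oscKernel hγ hδ hN m)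
      ((intervalIntegrable_oscKernel hγ N 0 δ).congr_uIoo
        (h_kernel.mono Ioo_subset_Icc_self)) k hu]
  congr 1
  refine Finset.sum_congr rfl fun m hm => ?_
  rw [hend m (Finset.mem_range.1 hm), ← neg_one_pow_mul_verticalAntideriv_oscKernel_zero hγ hN m]
  ring

theorem rpow_isBigO_rpow_of_le {p q : ℝ} (hpq : p ≤ q) :
    (fun N : ℝ => N ^ p) =O[𝓟 (Ici 1)] fun N => N ^ q := by
  refine isBigO_principal.2 ⟨1, fun N (hN : 1 ≤ N) => ?_⟩
  have hN' : 0 ≤ N := zero_le_one.trans hN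
  rw [one_mul, Real.norm_of_nonneg (Real.rpow_nonneg hN' p),
    Real.norm_of_nonneg (Real.rpow_nonneg hN' q)]
  exact Real.rpow_le_rpow_of_exponent_le hN hpq

theorem endpointCoeff_isBigO (γ : ℝ) (m : ℕ) :
    (fun N => endpointCoeff γ N m) =O[𝓟 (Ici 1)] fun N : ℝ => N ^ (-(m + γ)) := by
  refine isBigO_principal.2
    ⟨‖Real.Gamma (m + γ) * Complex.exp (Complex.I * Real.pi * (m + γ) / 2) / (m ! : ℂ)‖,
      fun N (hN : 1 ≤ N) => le_of_eq ?_⟩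
  rw [endpointCoeff, ← div_div, norm_div, Complex.norm_real, Real.rpow_neg (zero_le_one.trans hN),
    norm_inv, div_eq_mul_inv]

theorem integral_mul_verticalAntideriv_oscKernel_isBigO {δ : ℝ} {g : ℝ → ℂ} (hγ : 0 < γ)
    (hδ : 0 < δ) (hg : ContinuousOn g (Icc 0 δ)) (j : ℕ) :
    (fun N => ∫ θ in (0 : ℝ)..δ, g θ * verticalAntideriv (oscKernel γ N) (j + 1) θ)
      =O[𝓟 (Ici 1)] fun N : ℝ => N ^ (-(j : ℝ)) := by
  obtain ⟨B, hB⟩ := isCompact_Icc.exists_bound_of_continuousOn hg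
  have hB_nonneg : 0 ≤ B := (norm_nonneg _).trans (hB 0 (left_mem_Icc.2 hδ.le))
  set J := ∫ t in Ioi 0, oscMajorant γ δ (1 / 2) t
  have h_major (N : ℝ) (hN : 1 ≤ N) : ∫ t in Ioi 0, oscMajorant γ δ (N / 2) t ≤ J := by
    refine setIntegral_mono_on (integrableOn_oscMajorant hγ hδ (by positivity))
      (integrableOn_oscMajorant hγ hδ (by positivity)) measurableSet_Ioi fun t (ht : 0 < t) => ?_
    unfold oscMajorant
    gcongr
  refine isBigO_principal.2 ⟨B * (2 ^ j * J) * δ, fun N (hN : 1 ≤ N) => ?_⟩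
  have hN_pos : 0 < N := zero_lt_one.trans_le hN
  have h_pointwise (θ : ℝ) (hθ : θ ∈ uIoc 0 δ) :
      ‖g θ * verticalAntideriv (oscKernel γ N) (j + 1) θ‖ ≤ B * ((2 / N) ^ j * J) := by
    rw [uIoc_of_le hδ.le] at hθ
    have hθ' := Ioc_subset_Icc_self hθ
    rw [norm_mul]
    gcongr
    · exact hB θ hθ'
    · exact (norm_verticalAntideriv_oscKernel_le hγ hδ hN_pos hθ' j).trans
        (by gcongr; exact h_major N hN)
  refine (intervalIntegral.norm_integral_le_of_norm_le_const h_pointwise).trans_eq ?_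
  rw [sub_zero, abs_of_pos hδ, Real.norm_of_nonneg (by positivity), Real.rpow_neg hN_pos.le,
    Real.rpow_natCast, div_pow]
  ring

end EndpointExpansion

theorem oscillatoryIntegralExpansion_general {γ δ : ℝ} (hγ : 0 < γ) (hδ : 0 < δ) {u : ℝ → ℂ}
    {M K : ℕ} (hK : M + γ ≤ K) (hu : ContDiffOn ℝ (K + 1 : ℕ) u (Icc 0 δ))
    (hend : ∀ m ≤ K, iteratedDerivWithin m u (Icc 0 δ) δ = 0) :
    ∃ C : ℝ, 0 < C ∧ ∀ N : ℝ, 1 ≤ N →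
      ‖(∫ θ in (0 : ℝ)..δ, (θ ^ (γ - 1) : ℝ) * u θ * Complex.exp (Complex.I * N * θ)) -
          ∑ m ∈ Finset.range M,
            iteratedDerivWithin m u (Icc 0 δ) 0 * (Real.Gamma (m + γ) : ℂ) *
              Complex.exp (Complex.I * Real.pi * (m + γ) / 2) /
              ((m ! : ℂ) * ((N ^ (m + γ) : ℝ) : ℂ))‖ ≤
        C * N ^ (-(M + γ)) := by
  have hMK : M ≤ K + 1 := by
    have : (M : ℝ) ≤ (K + 1 : ℕ) := by push_cast; linarith
    exact_mod_cast this
  have h_tail : (fun N => ∑ m ∈ Finset.Ico M (K + 1),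
      iteratedDerivWithin m u (Icc 0 δ) 0 * endpointCoeff γ N m)
      =O[𝓟 (Ici 1)] fun N : ℝ => N ^ (-(M + γ)) := IsBigO.fun_sum fun m hm =>
    ((endpointCoeff_isBigO γ m).trans (rpow_isBigO_rpow_of_le (by
      have : (M : ℝ) ≤ m := mod_cast (Finset.mem_Ico.1 hm).1
      linarith))).const_mul_left _
  have h_remainder := ((integral_mul_verticalAntideriv_oscKernel_isBigO hγ hδ
    (hu.continuousOn_iteratedDerivWithin le_rfl (uniqueDiffOn_Icc hδ)) K).trans
    (rpow_isBigO_rpow_of_le (neg_le_neg hK))).const_mul_left ((-1) ^ (K + 1))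
  obtain ⟨C, hC, h_bound⟩ := (h_tail.add h_remainder).exists_pos
  refine ⟨C, hC, fun N hN => ?_⟩
  have h_le := isBigOWith_principal.1 h_bound N hN
  rw [Real.norm_of_nonneg (Real.rpow_nonneg (zero_le_one.trans hN) _),
    Finset.sum_Ico_eq_sub _ hMK, ← add_sub_right_comm, ← integral_rpow_mul_exp_eq_sum_add hγ hδ
      (zero_lt_one.trans_le hN) hu fun m hm => hend m (Nat.lt_succ_iff.1 hm)] at h_le
  simpa only [endpointCoeff, mul_div_assoc, mul_assoc] using h_le

/-- Fedoryuk-type expansion of an oscillatory integral.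
Let `γ > 0`, `δ > 0` and `u : [0, δ] → ℂ` a `C^∞` function all of whose derivatives
vanish at `δ`. Then `∫₀^δ θ^(γ-1) u(θ) e^(inθ) dθ` has the asymptotic expansion
`∑ₘ u^(m)(0) Γ(m+γ) e^(iπ(m+γ)/2) / (m! n^(m+γ))` as `n → ∞`. -/
theorem oscillatoryIntegralExpansion (γ δ : ℝ) (hγ : 0 < γ) (hδ : 0 < δ) (u : ℝ → ℂ)
    (hu : ContDiffOn ℝ (⊤ : ℕ∞) u (Set.Icc 0 δ))
    (hend : ∀ m : ℕ, iteratedDerivWithin m u (Set.Icc 0 δ) δ = 0) :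
    ∀ M : ℕ, ∃ C : ℝ, 0 < C ∧ ∀ n : ℕ, 1 ≤ n →
      ‖(∫ θ in (0:ℝ)..δ, (θ ^ (γ - 1) : ℝ) * u θ * Complex.exp (Complex.I * n * θ)) -
          ∑ m ∈ Finset.range M,
            iteratedDerivWithin m u (Set.Icc 0 δ) 0 * (Real.Gamma ((m : ℝ) + γ) : ℂ) *
              Complex.exp (Complex.I * Real.pi * ((m : ℝ) + γ) / 2) /
              ((m.factorial : ℂ) * (((n : ℝ) ^ ((m : ℝ) + γ) : ℝ) : ℂ))‖ ≤
        C * (n : ℝ) ^ (-((M : ℝ) + γ)) := by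
  intro M
  obtain ⟨K, hK⟩ := exists_nat_ge (M + γ)
  obtain ⟨C, hC, h_bound⟩ := oscillatoryIntegralExpansion_general hγ hδ hK
    (hu.of_le (mod_cast le_top)) fun m _ => hend m
  exact ⟨C, hC, fun n hn => mod_cast h_bound n (mod_cast hn)⟩
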